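/- Let b, c, ν, ρ ∈ ℂ with Re(ρ) > 0, Re(c) > 0 and Re(ν) > -1/2, and let z > 0 be real. Then the unified four parameter Bessel function admits the three-fold integral representation G_ν^{(b,c)}(z;ρ) = ((z/2)^ν / (π Γ(c) Γ(ν+1/2)²)) · ∫_0^1 ∫_0^1 ∫_0^1 t^{-1/2} u^{-1/2} s^{c+ν-1} (1-t)^{ν-1/2} (1-u)^{ν-1/2} (1-s)^{-c-ν-1} · exp( -(s² + ρ(1-s)²)/(s(1-s)) ) · ₀F₃(-; 1/4, 3/4, 1/2; -b z² s² u² t / (16(1-s)²)) ds dt du, the triple integral being over real s, t, u ∈ (0,1). -/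

import Mathlib

open Complex MeasureTheory Real Set

/-- Extended Gamma function `Γ_ρ(x) = ∫_0^∞ t^(x-1) e^(-t-ρ/t) dt`. -/
noncomputable def extGamma (ρ x : ℂ) : ℂ :=
  ∫ t in Ioi (0:ℝ), (t:ℂ) ^ (x - 1) * Complex.exp (-(t:ℂ) - ρ / (t:ℂ))

/-- Generalized Pochhammer symbol `(c;ρ)_μ = Γ_ρ(c+μ)/Γ(c)`. -/
noncomputable def genPoch (c ρ μ : ℂ) : ℂ := extGamma ρ (c + μ) / Complex.Gamma c

/-- Unified four parameter Bessel function `G_ν^{(b,c)}(z;ρ)` with complex order,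
powers being principal complex powers. -/
noncomputable def unifiedG (b c ν ρ z : ℂ) : ℂ :=
  ∑' k : ℕ, (-b) ^ k * genPoch c ρ (2 * (k:ℂ) + ν) * (z / 2) ^ (2 * (k:ℂ) + ν) /
    ((k.factorial : ℂ) * Complex.Gamma (ν + (k:ℂ) + 1) * Complex.Gamma (ν + 2 * (k:ℂ) + 1))

/-- Unified four parameter Bessel function with integer order, powers being integer powers. -/
noncomputable def unifiedGInt (b c ρ : ℂ) (ν : ℤ) (z : ℂ) : ℂ :=
  ∑' k : ℕ, (-b) ^ k * genPoch c ρ (2 * (k:ℂ) + (ν:ℂ)) * (z / 2) ^ (2 * (k:ℤ) + ν) /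
    ((k.factorial : ℂ) * Complex.Gamma ((ν:ℂ) + (k:ℂ) + 1) * Complex.Gamma ((ν:ℂ) + 2 * (k:ℂ) + 1))

/-- Pochhammer symbol `(a)_k = Γ(a+k)/Γ(a)`. -/
noncomputable def poch (a : ℂ) (k : ℕ) : ℂ := Complex.Gamma (a + (k:ℂ)) / Complex.Gamma a

/-- Generalized hypergeometric function `₀F₃`. -/
noncomputable def hyp0F3 (a₁ a₂ a₃ w : ℂ) : ℂ :=
  ∑' k : ℕ, w ^ k / (poch a₁ k * poch a₂ k * poch a₃ k * (k.factorial : ℂ))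

/-- Generalized hypergeometric function `₂F₃`. -/
noncomputable def hyp2F3 (a₁ a₂ b₁ b₂ b₃ w : ℂ) : ℂ :=
  ∑' k : ℕ, poch a₁ k * poch a₂ k * w ^ k /
    (poch b₁ k * poch b₂ k * poch b₃ k * (k.factorial : ℂ))

/-- Bessel function of the first kind `J_μ(z)` for real `z > 0`. -/
noncomputable def besselJ (μ : ℂ) (z : ℝ) : ℂ :=
  ∑' k : ℕ, (-1) ^ k * ((z:ℂ) / 2) ^ (2 * (k:ℂ) + μ) /
    ((k.factorial : ℂ) * Complex.Gamma (μ + (k:ℂ) + 1))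

/-- Generalized four parameter spherical Bessel function
`g_ν^{(b,c)}(z;ρ) = √(π/(2z)) · G_{ν+1/2}^{(b,c-1/2)}(z;ρ)`. -/
noncomputable def sphG (b c ν ρ : ℂ) (z : ℝ) : ℂ :=
  (Real.sqrt (π / (2 * z)) : ℂ) * unifiedG b (c - 1/2) (ν + 1/2) ρ (z:ℂ)

/-- Generalized four parameter Bessel-Clifford function
`C_ν^{(b,λ)}(z;ρ) = z^{-ν/2} · G_ν^{(b,λ)}(2√z;ρ)` for real `z > 0`. -/
noncomputable def cliffC (b lam ν ρ : ℂ) (z : ℝ) : ℂ :=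
  (z:ℂ) ^ (-ν / 2) * unifiedG b lam ν ρ ((2 * Real.sqrt z : ℝ) : ℂ)

lemma poch_succ {a : ℂ} {k : ℕ} (h : a + k ≠ 0) : poch a (k + 1) = (a + k) * poch a k := by
  unfold poch
  rw [Nat.cast_succ, ← add_assoc, Complex.Gamma_add_one _ h, mul_div_assoc]

lemma factorial_div_four_pow_le_norm_poch {a : ℝ} (ha : 1 / 4 ≤ a) (k : ℕ) :
    (k.factorial : ℝ) / 4 ^ k ≤ ‖poch a k‖ := by
  induction k with
  | zero =>
    have : Complex.Gamma a ≠ 0 := Complex.Gamma_ne_zero_of_re_pos (by simp; linarith)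
    simp [poch, this]
  | succ k ih =>
    have hpos : 0 < a + k := by positivity
    rw [poch_succ (by exact_mod_cast hpos.ne'), norm_mul, Nat.factorial_succ]
    have h1 : ‖(a : ℂ) + k‖ = a + k := by
      rw [← Complex.ofReal_natCast, ← Complex.ofReal_add, Complex.norm_of_nonneg hpos.le]
    have h2 : ((k : ℝ) + 1) / 4 ≤ a + k := by
      have : (0 : ℝ) ≤ k := k.cast_nonneg
      linarith
    rw [h1]
    calc (((k + 1) * k.factorial : ℕ) : ℝ) / 4 ^ (k + 1)
        = ((k : ℝ) + 1) / 4 * (k.factorial / 4 ^ k) := by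
          push_cast; rw [pow_succ]; field_simp
      _ ≤ _ := by gcongr

/-- The denominators of the series `₀F₃(-; 1/4, 3/4, 1/2; w)`. -/
noncomputable def hypDen (k : ℕ) : ℂ :=
  poch (1 / 4) k * poch (3 / 4) k * poch (1 / 2) k * (k.factorial : ℂ)

lemma factorial_pow_div_le_norm_hypDen (k : ℕ) :
    (k.factorial : ℝ) ^ 4 / 64 ^ k ≤ ‖hypDen k‖ := by
  have h1 := factorial_div_four_pow_le_norm_poch (a := 1 / 4) (by norm_num) k
  have h2 := factorial_div_four_pow_le_norm_poch (a := 3 / 4) (by norm_num) k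
  have h3 := factorial_div_four_pow_le_norm_poch (a := 1 / 2) (by norm_num) k
  push_cast at h1 h2 h3
  rw [hypDen, norm_mul, norm_mul, norm_mul, Complex.norm_natCast]
  calc (k.factorial : ℝ) ^ 4 / 64 ^ k
      = k.factorial / 4 ^ k * (k.factorial / 4 ^ k) * (k.factorial / 4 ^ k) * k.factorial := by
        rw [show (64 : ℝ) = 4 * 4 * 4 by norm_num, mul_pow, mul_pow]
        field_simp
    _ ≤ _ := by gcongr

lemma factorial_two_mul_le (k : ℕ) : (2 * k).factorial ≤ 4 ^ k * k.factorial ^ 2 := by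
  have h := Nat.choose_mul_factorial_mul_factorial (n := 2 * k) (k := k) (by omega)
  rw [show 2 * k - k = k by omega, ← Nat.centralBinom_eq_two_mul_choose] at h
  rw [← h, mul_assoc, ← sq]
  exact Nat.mul_le_mul_right _ (Nat.centralBinom_le_four_pow k)

lemma summable_norm_pow_div_hypDen_mul (w : ℂ) :
    Summable fun k : ℕ => ‖w ^ k / hypDen k‖ * (4 ^ k * ((2 * k).factorial : ℝ)) := by
  refine .of_nonneg_of_le (fun k => by positivity) (fun k => ?_)
    (Real.summable_pow_div_factorial (1024 * ‖w‖))
  have hf : (1 : ℝ) ≤ k.factorial := by exact_mod_cast k.factorial_pos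
  have h2 : ((2 * k).factorial : ℝ) ≤ 4 ^ k * (k.factorial : ℝ) ^ 2 := by
    exact_mod_cast factorial_two_mul_le k
  rw [norm_div, norm_pow]
  calc ‖w‖ ^ k / ‖hypDen k‖ * (4 ^ k * ((2 * k).factorial : ℝ))
      ≤ ‖w‖ ^ k / ((k.factorial : ℝ) ^ 4 / 64 ^ k) * (4 ^ k * (4 ^ k * (k.factorial : ℝ) ^ 2)) := by
        gcongr
        exact factorial_pow_div_le_norm_hypDen k
    _ = (1024 * ‖w‖) ^ k / (k.factorial : ℝ) ^ 2 := by
        rw [show (1024 : ℝ) = 64 * 4 * 4 by norm_num, mul_pow, mul_pow, mul_pow]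
        field_simp
    _ ≤ (1024 * ‖w‖) ^ k / k.factorial := by
        gcongr
        exact le_self_pow₀ hf two_ne_zero

/-- A dominating function for the integrands of `extGamma`. -/
noncomputable def extGammaBound (r σ x : ℝ) : ℝ :=
  x ^ (σ - 1) * Real.exp (-(1 / 2) * x) * Real.exp (-(r / x))

lemma integrableOn_extGammaBound {r : ℝ} (hr : 0 < r) (σ : ℝ) :
    IntegrableOn (extGammaBound r σ) (Ioi 0) := by
  obtain ⟨n, hn⟩ := exists_nat_gt (-σ)
  have hg := (integrableOn_rpow_mul_exp_neg_mul_rpow (p := 1) (s := σ - 1 + n) (b := 1 / 2)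
    (by linarith) one_pos (by norm_num)).mul_const (n.factorial / r ^ n)
  refine hg.mono' ?_ ?_
  · refine ContinuousOn.aestronglyMeasurable (fun x hx => ContinuousAt.continuousWithinAt ?_)
      measurableSet_Ioi
    have hx' : x ≠ 0 := (mem_Ioi.mp hx).ne'
    unfold extGammaBound
    exact ((Real.continuousAt_rpow_const _ _ (.inl hx')).mul (by fun_prop)).mul
      (by fun_prop (disch := assumption))
  · refine (ae_restrict_iff' measurableSet_Ioi).mpr (.of_forall fun x hx => ?_)
    have hx : 0 < x := hx
    have hexp : Real.exp (-(r / x)) ≤ x ^ n * (n.factorial / r ^ n) := by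
      have h := Real.pow_div_factorial_le_exp (r / x) (by positivity) n
      rw [Real.exp_neg, inv_le_comm₀ (by positivity) (by positivity)]
      refine le_trans (le_of_eq ?_) h
      rw [div_pow]
      field_simp
    rw [extGammaBound, Real.norm_of_nonneg (by positivity), Real.rpow_one, Real.rpow_add hx,
      Real.rpow_natCast]
    calc _ ≤ x ^ (σ - 1) * Real.exp (-(1 / 2) * x) * (x ^ n * (n.factorial / r ^ n)) := by gcongr
      _ = _ := by ring

lemma norm_extGamma_integrand_le (ρ μ : ℂ) (k : ℕ) {x : ℝ} (hx : 0 < x) :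
    ‖(x : ℂ) ^ (μ + 2 * k - 1) * Complex.exp (-(x : ℂ) - ρ / x)‖ ≤
      4 ^ k * ((2 * k).factorial : ℝ) * extGammaBound ρ.re μ.re x := by
  have h := Real.pow_div_factorial_le_exp (x / 2) (by positivity) (2 * k)
  have hre : (-(x : ℂ) - ρ / x).re = -(1 / 2) * x + -(x / 2) + -(ρ.re / x) := by
    rw [Complex.sub_re, Complex.neg_re, Complex.ofReal_re, Complex.div_ofReal_re]; ring
  have hμ : (μ + 2 * k - 1 : ℂ).re = (μ.re - 1) + (2 * k : ℕ) := by simp; ring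
  rw [norm_mul, Complex.norm_cpow_eq_rpow_re_of_pos hx, Complex.norm_exp, hre, hμ,
    Real.rpow_add hx, Real.rpow_natCast, Real.exp_add, Real.exp_add]
  have hle : x ^ (2 * k) * Real.exp (-(x / 2)) ≤ 4 ^ k * ((2 * k).factorial : ℝ) := by
    rw [Real.exp_neg, ← div_eq_mul_inv, div_le_iff₀ (by positivity)]
    rw [div_le_iff₀ (by positivity), div_pow, div_le_iff₀ (by positivity), pow_mul 2] at h
    norm_num at h
    linarith
  unfold extGammaBound
  calc _ = (x ^ (2 * k) * Real.exp (-(x / 2))) *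
        (x ^ (μ.re - 1) * Real.exp (-(1 / 2) * x) * Real.exp (-(ρ.re / x))) := by ring
    _ ≤ _ := by gcongr

lemma integrableOn_extGamma_integrand {ρ : ℂ} (hρ : 0 < ρ.re) (μ : ℂ) (k : ℕ) :
    IntegrableOn (fun x : ℝ => (x : ℂ) ^ (μ + 2 * k - 1) * Complex.exp (-(x : ℂ) - ρ / x))
      (Ioi 0) := by
  refine ((integrableOn_extGammaBound hρ μ.re).const_mul
    (4 ^ k * ((2 * k).factorial : ℝ))).mono' ?_ ?_
  · refine ContinuousOn.aestronglyMeasurable (fun x hx => ContinuousAt.continuousWithinAt ?_)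
      measurableSet_Ioi
    have hx' : (x : ℂ) ≠ 0 := by exact_mod_cast (mem_Ioi.mp hx).ne'
    refine (Complex.continuousAt_ofReal_cpow_const _ _ (.inr (mem_Ioi.mp hx).ne')).mul ?_
    fun_prop (disch := assumption)
  · exact (ae_restrict_iff' measurableSet_Ioi).mpr
      (.of_forall fun x hx => norm_extGamma_integrand_le ρ μ k hx)

lemma integral_norm_extGamma_integrand_le {ρ : ℂ} (hρ : 0 < ρ.re) (μ : ℂ) (k : ℕ) :
    ∫ x in Ioi (0 : ℝ), ‖(x : ℂ) ^ (μ + 2 * k - 1) * Complex.exp (-(x : ℂ) - ρ / x)‖ ≤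
      4 ^ k * ((2 * k).factorial : ℝ) * ∫ x in Ioi (0 : ℝ), extGammaBound ρ.re μ.re x := by
  rw [← integral_const_mul]
  exact setIntegral_mono_on (integrableOn_extGamma_integrand hρ μ k).norm
    ((integrableOn_extGammaBound hρ μ.re).const_mul _) measurableSet_Ioi
    fun x hx => norm_extGamma_integrand_le ρ μ k hx

lemma summable_integral_norm_extGamma_integrand {ρ : ℂ} (hρ : 0 < ρ.re) (μ w : ℂ) :
    Summable fun k : ℕ => ‖w ^ k / hypDen k‖ *
      ∫ x in Ioi (0 : ℝ), ‖(x : ℂ) ^ (μ + 2 * k - 1) * Complex.exp (-(x : ℂ) - ρ / x)‖ := by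
  refine .of_nonneg_of_le (fun k => by positivity) (fun k => ?_)
    ((summable_norm_pow_div_hypDen_mul w).mul_right
      (∫ x in Ioi (0 : ℝ), extGammaBound ρ.re μ.re x))
  rw [mul_assoc]
  gcongr
  exact integral_norm_extGamma_integrand_le hρ μ k

lemma summable_norm_pow_div_hypDen_mul_extGamma {ρ : ℂ} (hρ : 0 < ρ.re) (μ w : ℂ) :
    Summable fun k : ℕ => ‖w ^ k / hypDen k * extGamma ρ (μ + 2 * k)‖ := by
  refine .of_nonneg_of_le (fun k => by positivity) (fun k => ?_)
    (summable_integral_norm_extGamma_integrand hρ μ w)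
  rw [norm_mul]
  gcongr
  exact norm_integral_le_integral_norm _

lemma integral_Ioi_mul_hyp0F3 {ρ : ℂ} (hρ : 0 < ρ.re) (μ w : ℂ) :
    ∫ x in Ioi (0 : ℝ), (x : ℂ) ^ (μ - 1) * Complex.exp (-(x : ℂ) - ρ / x) *
        hyp0F3 (1 / 4) (3 / 4) (1 / 2) (w * (x : ℂ) ^ 2) =
      ∑' k : ℕ, w ^ k / hypDen k * extGamma ρ (μ + 2 * k) := by
  have h := hasSum_integral_of_summable_integral_norm (μ := volume.restrict (Ioi (0 : ℝ)))
    (F := fun (k : ℕ) (x : ℝ) => w ^ k / hypDen k *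
      ((x : ℂ) ^ (μ + 2 * k - 1) * Complex.exp (-(x : ℂ) - ρ / x)))
    (fun k => (integrableOn_extGamma_integrand hρ μ k).const_mul _)
    (by
      simp_rw [norm_mul (_ / _ : ℂ), integral_const_mul]
      exact summable_integral_norm_extGamma_integrand hρ μ w)
  simp_rw [integral_const_mul] at h
  refine Eq.trans (setIntegral_congr_fun measurableSet_Ioi fun x hx => ?_) h.tsum_eq.symm
  have hx' : (x : ℂ) ≠ 0 := by exact_mod_cast (mem_Ioi.mp hx).ne'
  simp only [hyp0F3]
  rw [← tsum_mul_left]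
  refine tsum_congr fun k => ?_
  rw [show μ + 2 * k - 1 = (μ - 1) + (2 * k : ℕ) by push_cast; ring, Complex.cpow_add _ _ hx',
    Complex.cpow_natCast, hypDen, mul_pow, pow_mul]
  ring

lemma image_div_one_sub_Ioo : (fun s : ℝ => s / (1 - s)) '' Ioo 0 1 = Ioi 0 := by
  ext x
  constructor
  · rintro ⟨s, ⟨h0, h1⟩, rfl⟩
    exact div_pos h0 (sub_pos.mpr h1)
  · intro hx
    have hx : 0 < x := hx
    refine ⟨x / (1 + x), ⟨by positivity, (div_lt_one (by positivity)).mpr (by linarith)⟩, ?_⟩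
    field_simp
    ring

lemma integral_Ioi_eq_integral_Ioo_div_one_sub {E : Type*} [NormedAddCommGroup E]
    [NormedSpace ℝ E] (g : ℝ → E) :
    ∫ x in Ioi (0 : ℝ), g x =
      ∫ s in Ioo (0 : ℝ) 1, (1 / (1 - s) ^ 2) • g (s / (1 - s)) := by
  rw [← image_div_one_sub_Ioo, integral_image_eq_integral_abs_deriv_smul measurableSet_Ioo
    (f' := fun s => 1 / (1 - s) ^ 2)]
  · exact setIntegral_congr_fun measurableSet_Ioo fun s _ => by
      rw [abs_of_nonneg (by positivity)]
  · intro s hs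
    have hs' : 1 - s ≠ 0 := (sub_pos.mpr hs.2).ne'
    convert! ((hasDerivAt_id s).div ((hasDerivAt_id s).const_sub 1) hs').hasDerivWithinAt using 1
    simp
  · intro s hs t ht h
    have hs' : 1 - s ≠ 0 := (sub_pos.mpr hs.2).ne'
    have ht' : 1 - t ≠ 0 := (sub_pos.mpr ht.2).ne'
    rw [div_eq_div_iff hs' ht'] at h
    linarith

lemma integral_Ioo_mul_hyp0F3 {ρ : ℂ} (hρ : 0 < ρ.re) (μ w : ℂ) :
    ∫ s in Ioo (0 : ℝ) 1, (s : ℂ) ^ (μ - 1) * ((1 : ℂ) - s) ^ (-μ - 1) *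
        Complex.exp (-((s : ℂ) ^ 2 + ρ * ((1 : ℂ) - s) ^ 2) / ((s : ℂ) * ((1 : ℂ) - s))) *
        hyp0F3 (1 / 4) (3 / 4) (1 / 2) (w * ((s : ℂ) / (1 - s)) ^ 2) =
      ∑' k : ℕ, w ^ k / hypDen k * extGamma ρ (μ + 2 * k) := by
  rw [← integral_Ioi_mul_hyp0F3 hρ, integral_Ioi_eq_integral_Ioo_div_one_sub]
  refine setIntegral_congr_fun measurableSet_Ioo fun s hs => ?_
  have h0 : (s : ℂ) ≠ 0 := by exact_mod_cast hs.1.ne'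
  have h1 : (1 : ℂ) - s ≠ 0 := by exact_mod_cast (sub_pos.mpr hs.2).ne'
  have hpow : ((s / (1 - s) : ℝ) : ℂ) ^ (μ - 1) =
      (s : ℂ) ^ (μ - 1) * ((1 : ℂ) - s) ^ (-μ - 1) * ((1 : ℂ) - s) ^ 2 := by
    rw [div_eq_mul_inv, Complex.ofReal_mul, Complex.mul_cpow_ofReal_nonneg hs.1.le
      (inv_nonneg.mpr (sub_pos.mpr hs.2).le), mul_assoc, ← Complex.cpow_natCast _ 2,
      ← Complex.cpow_add _ _ h1, Complex.ofReal_inv, Complex.inv_cpow, ← Complex.cpow_neg]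
    · congr 2
      · simp
      · push_cast; ring
    · rw [Complex.arg_ofReal_of_nonneg (sub_pos.mpr hs.2).le]
      exact Real.pi_pos.ne
  have hexp : -((s : ℂ) ^ 2 + ρ * ((1 : ℂ) - s) ^ 2) / ((s : ℂ) * ((1 : ℂ) - s)) =
      -((s / (1 - s) : ℝ) : ℂ) - ρ / ((s / (1 - s) : ℝ) : ℂ) := by
    push_cast
    field_simp
    ring
  rw [hpow, hexp, Complex.real_smul]
  push_cast
  field_simp

lemma betaIntegral_eq_integral_Ioo (u v : ℂ) :
    Complex.betaIntegral u v =
      ∫ x in Ioo (0 : ℝ) 1, (x : ℂ) ^ (u - 1) * ((1 : ℂ) - x) ^ (v - 1) := by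
  rw [Complex.betaIntegral, intervalIntegral.integral_of_le zero_le_one,
    integral_Ioc_eq_integral_Ioo]

lemma integrableOn_beta_integrand {u v : ℂ} (hu : 0 < u.re) (hv : 0 < v.re) :
    IntegrableOn (fun x : ℝ => (x : ℂ) ^ (u - 1) * ((1 : ℂ) - x) ^ (v - 1)) (Ioo 0 1) :=
  ((intervalIntegrable_iff_integrableOn_Ioc_of_le zero_le_one).mp
    (Complex.betaIntegral_convergent hu hv)).mono_set Ioo_subset_Ioc_self

lemma norm_cpow_add_natCast_le {x : ℝ} (hx : x ∈ Ioo (0 : ℝ) 1) (u : ℂ) (n : ℕ) :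
    ‖(x : ℂ) ^ (u + n - 1)‖ ≤ ‖(x : ℂ) ^ (u - 1)‖ := by
  rw [Complex.norm_cpow_eq_rpow_re_of_pos hx.1, Complex.norm_cpow_eq_rpow_re_of_pos hx.1]
  exact Real.rpow_le_rpow_of_exponent_ge hx.1 hx.2.le (by simp)

lemma integral_norm_beta_integrand_le {u v : ℂ} (hu : 0 < u.re) (hv : 0 < v.re) (n : ℕ) :
    ∫ x in Ioo (0 : ℝ) 1, ‖(x : ℂ) ^ (u + n - 1) * ((1 : ℂ) - x) ^ (v - 1)‖ ≤
      ∫ x in Ioo (0 : ℝ) 1, ‖(x : ℂ) ^ (u - 1) * ((1 : ℂ) - x) ^ (v - 1)‖ := by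
  refine setIntegral_mono_on (integrableOn_beta_integrand ?_ hv).norm
    (integrableOn_beta_integrand hu hv).norm measurableSet_Ioo fun x hx => ?_
  · simp; positivity
  · rw [norm_mul, norm_mul]
    gcongr
    exact norm_cpow_add_natCast_le hx u n

lemma norm_betaIntegral_add_natCast_le {u v : ℂ} (hu : 0 < u.re) (hv : 0 < v.re) (n : ℕ) :
    ‖Complex.betaIntegral (u + n) v‖ ≤
      ∫ x in Ioo (0 : ℝ) 1, ‖(x : ℂ) ^ (u - 1) * ((1 : ℂ) - x) ^ (v - 1)‖ := by
  rw [betaIntegral_eq_integral_Ioo]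
  exact (norm_integral_le_integral_norm _).trans (integral_norm_beta_integrand_le hu hv n)

lemma integral_beta_mul_tsum {u v : ℂ} (hu : 0 < u.re) (hv : 0 < v.re) {A : ℕ → ℂ}
    (hA : Summable fun k => ‖A k‖) (m : ℕ) :
    ∫ x in Ioo (0 : ℝ) 1, (x : ℂ) ^ (u - 1) * ((1 : ℂ) - x) ^ (v - 1) *
        ∑' k, A k * (x : ℂ) ^ (m * k) =
      ∑' k, A k * Complex.betaIntegral (u + (m * k : ℕ)) v := by
  have h := hasSum_integral_of_summable_integral_norm (μ := volume.restrict (Ioo (0 : ℝ) 1))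
    (F := fun (k : ℕ) (x : ℝ) => A k *
      ((x : ℂ) ^ (u + (m * k : ℕ) - 1) * ((1 : ℂ) - x) ^ (v - 1)))
    (fun k => (integrableOn_beta_integrand (by
      rw [Complex.add_re, Complex.natCast_re]; positivity) hv).const_mul _)
    (by
      simp_rw [norm_mul (A _), integral_const_mul]
      refine .of_nonneg_of_le (fun k => by positivity) (fun k => ?_)
        (hA.mul_right (∫ x in Ioo (0 : ℝ) 1, ‖(x : ℂ) ^ (u - 1) * ((1 : ℂ) - x) ^ (v - 1)‖))
      exact mul_le_mul_of_nonneg_left (integral_norm_beta_integrand_le hu hv _) (norm_nonneg _))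
  simp_rw [integral_const_mul, ← betaIntegral_eq_integral_Ioo] at h
  refine Eq.trans (setIntegral_congr_fun measurableSet_Ioo fun x hx => ?_) h.tsum_eq.symm
  have hx' : (x : ℂ) ≠ 0 := by exact_mod_cast hx.1.ne'
  rw [← tsum_mul_left]
  refine tsum_congr fun k => ?_
  rw [show u + (m * k : ℕ) - 1 = (u - 1) + (m * k : ℕ) by ring, Complex.cpow_add _ _ hx',
    Complex.cpow_natCast]
  ring

lemma summable_norm_mul_betaIntegral {u v : ℂ} (hu : 0 < u.re) (hv : 0 < v.re) {A : ℕ → ℂ}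
    (hA : Summable fun k => ‖A k‖) (m : ℕ) :
    Summable fun k => ‖A k * Complex.betaIntegral (u + (m * k : ℕ)) v‖ := by
  refine .of_nonneg_of_le (fun k => by positivity) (fun k => ?_)
    (hA.mul_right (∫ x in Ioo (0 : ℝ) 1, ‖(x : ℂ) ^ (u - 1) * ((1 : ℂ) - x) ^ (v - 1)‖))
  rw [norm_mul]
  gcongr
  exact norm_betaIntegral_add_natCast_le hu hv _

lemma hypDen_mul_pi (k : ℕ) :
    hypDen k * π * 4 ^ k =
      Complex.Gamma (1 / 2 + k) * Complex.Gamma (1 / 2 + 2 * k) * k.factorial := by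
  have hk := Complex.Gamma_mul_Gamma_add_half (1 / 4 + k)
  have h0 := Complex.Gamma_mul_Gamma_add_half (1 / 4)
  rw [show (1 / 4 + k + 1 / 2 : ℂ) = 3 / 4 + k by ring,
    show (2 * (1 / 4 + k) : ℂ) = 1 / 2 + 2 * k by ring,
    show (1 - (1 / 2 + 2 * k) : ℂ) = 1 / 2 - (2 * k : ℕ) by push_cast; ring,
    Complex.cpow_sub _ _ two_ne_zero, Complex.cpow_natCast, pow_mul] at hk
  rw [show (1 / 4 + 1 / 2 : ℂ) = 3 / 4 by norm_num, show (2 * (1 / 4) : ℂ) = 1 / 2 by norm_num,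
    show (1 - 1 / 2 : ℂ) = 1 / 2 by norm_num] at h0
  norm_num at hk h0
  have hG2 : Complex.Gamma (1 / 2) ≠ 0 := Complex.Gamma_ne_zero_of_re_pos (by norm_num)
  have hsq : Complex.Gamma (1 / 2) * Complex.Gamma (1 / 2) = π := by
    rw [Complex.Gamma_one_half_eq, ← Complex.cpow_add _ _ (by exact_mod_cast Real.pi_ne_zero)]
    norm_num
  have hden : hypDen k * π * 4 ^ k =
      (Complex.Gamma (1 / 4 + k) * Complex.Gamma (3 / 4 + k)) /
        (Complex.Gamma (1 / 4) * Complex.Gamma (3 / 4)) *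
        (Complex.Gamma (1 / 2 + k) / Complex.Gamma (1 / 2)) * k.factorial *
        (Complex.Gamma (1 / 2) * Complex.Gamma (1 / 2)) * 4 ^ k := by
    rw [hsq, hypDen, poch, poch, poch]
    field_simp
  rw [hden]
  norm_num
  rw [hk, h0]
  field_simp

lemma unifiedG_term_eq {b c ν ρ : ℂ} (hν : -(1 / 2 : ℝ) < ν.re) (z : ℂ) (hz : z ≠ 0) (k : ℕ) :
    (-b) ^ k * genPoch c ρ (2 * (k : ℂ) + ν) * (z / 2) ^ (2 * (k : ℂ) + ν) /
        ((k.factorial : ℂ) * Complex.Gamma (ν + (k : ℂ) + 1) *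
          Complex.Gamma (ν + 2 * (k : ℂ) + 1)) =
      (z / 2) ^ ν / ((π : ℂ) * Complex.Gamma c * Complex.Gamma (ν + 1 / 2) ^ 2) *
        ((-b * z ^ 2 / 16) ^ k / hypDen k * extGamma ρ (c + ν + 2 * k) *
          Complex.betaIntegral (1 / 2 + (1 * k : ℕ)) (ν + 1 / 2) *
          Complex.betaIntegral (1 / 2 + (2 * k : ℕ)) (ν + 1 / 2)) := by
  have hv : 0 < (ν + 1 / 2).re := by norm_num at hν ⊢; linarith
  have hu : 0 < (1 / 2 : ℂ).re := by norm_num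
  have hbeta (n : ℕ) : Complex.betaIntegral (1 / 2 + n) (ν + 1 / 2) =
      Complex.Gamma (1 / 2 + n) * Complex.Gamma (ν + 1 / 2) / Complex.Gamma (ν + n + 1) := by
    have hs : 0 < (1 / 2 + n : ℂ).re := by
      rw [Complex.add_re, Complex.natCast_re]; positivity
    rw [Complex.Gamma_mul_Gamma_eq_betaIntegral hs hv,
      show (1 / 2 + n + (ν + 1 / 2) : ℂ) = ν + n + 1 by ring, mul_div_cancel_left₀]
    refine Complex.Gamma_ne_zero_of_re_pos ?_
    rw [show ν + n + 1 = (1 / 2 + n) + (ν + 1 / 2) by ring, Complex.add_re]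
    exact add_pos hs hv
  have hG (n : ℕ) : Complex.Gamma (1 / 2 + n) ≠ 0 :=
    Complex.Gamma_ne_zero_of_re_pos (by rw [Complex.add_re, Complex.natCast_re]; positivity)
  have hGk := hG k
  have hG2k := hG (2 * k)
  have hGv := Complex.Gamma_ne_zero_of_re_pos hv
  have hfac : (k.factorial : ℂ) ≠ 0 := by exact_mod_cast k.factorial_ne_zero
  have hpi : (π : ℂ) ≠ 0 := by exact_mod_cast Real.pi_ne_zero
  have hden : hypDen k = Complex.Gamma (1 / 2 + k) * Complex.Gamma (1 / 2 + (2 * k : ℕ)) *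
      k.factorial / (π * 4 ^ k) := by
    rw [eq_div_iff (mul_ne_zero hpi (pow_ne_zero k (by norm_num : (4 : ℂ) ≠ 0))), ← mul_assoc, hypDen_mul_pi]
    push_cast
    rfl
  have hpow : (z / 2) ^ (2 * (k : ℂ) + ν) = (z ^ 2 / 4) ^ k * (z / 2) ^ ν := by
    rw [Complex.cpow_add _ _ (div_ne_zero hz two_ne_zero),
      show (2 * (k : ℂ)) = (2 * k : ℕ) by push_cast; rfl, Complex.cpow_natCast, pow_mul, div_pow]
    norm_num
  have hw : (-b * z ^ 2 / 16) ^ k = (-b) ^ k * (z ^ 2 / 4) ^ k / 4 ^ k := by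
    rw [← mul_pow, ← div_pow]
    ring
  rw [one_mul, hbeta, hbeta, hpow, hw, hden, genPoch,
    show c + (2 * (k : ℂ) + ν) = c + ν + 2 * k by ring,
    show ν + 2 * (k : ℂ) + 1 = ν + (2 * k : ℕ) + 1 by push_cast; rfl]
  generalize Complex.Gamma (1 / 2 + k) = g₁ at hGk ⊢
  generalize Complex.Gamma (1 / 2 + (2 * k : ℕ)) = g₂ at hG2k ⊢
  generalize Complex.Gamma (ν + 1 / 2) = g₃ at hGv ⊢
  field_simp

theorem stmt16 (b c ν ρ : ℂ) (hρ : 0 < ρ.re) (hc : 0 < c.re)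
    (hν : -(1/2 : ℝ) < ν.re) (z : ℝ) (hz : 0 < z) :
    unifiedG b c ν ρ (z:ℂ) =
      ((z:ℂ) / 2) ^ ν / ((π:ℂ) * Complex.Gamma c * Complex.Gamma (ν + 1/2) ^ 2) *
        ∫ u in Ioo (0:ℝ) 1, ∫ t in Ioo (0:ℝ) 1, ∫ s in Ioo (0:ℝ) 1,
          (t:ℂ) ^ (-(1/2) : ℂ) * (u:ℂ) ^ (-(1/2) : ℂ) * (s:ℂ) ^ (c + ν - 1) *
            ((1:ℂ) - (t:ℂ)) ^ (ν - 1/2) * ((1:ℂ) - (u:ℂ)) ^ (ν - 1/2) *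
            ((1:ℂ) - (s:ℂ)) ^ (-c - ν - 1) *
            Complex.exp (-((s:ℂ) ^ 2 + ρ * ((1:ℂ) - (s:ℂ)) ^ 2) / ((s:ℂ) * ((1:ℂ) - (s:ℂ)))) *
            hyp0F3 (1/4) (3/4) (1/2)
              (-b * (z:ℂ) ^ 2 * (s:ℂ) ^ 2 * (u:ℂ) ^ 2 * (t:ℂ) / (16 * ((1:ℂ) - (s:ℂ)) ^ 2)) := by
  have hu : 0 < (1 / 2 : ℂ).re := by norm_num
  have hv : 0 < (ν + 1 / 2).re := by norm_num at hν ⊢; linarith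
  set w : ℂ := -b * (z : ℂ) ^ 2 / 16 with hw
  set A : ℕ → ℂ := fun k => w ^ k / hypDen k * extGamma ρ (c + ν + 2 * k) with hA_def
  have hA : Summable fun k => ‖A k‖ := summable_norm_pow_div_hypDen_mul_extGamma hρ _ w
  have inner (u t : ℝ) : ∫ s in Ioo (0:ℝ) 1,
          (t:ℂ) ^ (-(1/2) : ℂ) * (u:ℂ) ^ (-(1/2) : ℂ) * (s:ℂ) ^ (c + ν - 1) *
            ((1:ℂ) - (t:ℂ)) ^ (ν - 1/2) * ((1:ℂ) - (u:ℂ)) ^ (ν - 1/2) *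
            ((1:ℂ) - (s:ℂ)) ^ (-c - ν - 1) *
            Complex.exp (-((s:ℂ) ^ 2 + ρ * ((1:ℂ) - (s:ℂ)) ^ 2) / ((s:ℂ) * ((1:ℂ) - (s:ℂ)))) *
            hyp0F3 (1/4) (3/4) (1/2)
              (-b * (z:ℂ) ^ 2 * (s:ℂ) ^ 2 * (u:ℂ) ^ 2 * (t:ℂ) / (16 * ((1:ℂ) - (s:ℂ)) ^ 2)) =
      (u:ℂ) ^ (1/2 - 1 : ℂ) * ((1:ℂ) - (u:ℂ)) ^ (ν + 1/2 - 1) *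
        ((t:ℂ) ^ (1/2 - 1 : ℂ) * ((1:ℂ) - (t:ℂ)) ^ (ν + 1/2 - 1) *
          ∑' k, A k * (u : ℂ) ^ (2 * k) * (t : ℂ) ^ (1 * k)) := by
    have hsum : ∑' k, A k * (u : ℂ) ^ (2 * k) * (t : ℂ) ^ (1 * k) =
        ∑' k : ℕ, (w * (u : ℂ) ^ 2 * t) ^ k / hypDen k * extGamma ρ (c + ν + 2 * k) := by
      refine tsum_congr fun k => ?_
      rw [hA_def, mul_pow, mul_pow, pow_mul, one_mul]
      ring
    rw [hsum, ← integral_Ioo_mul_hyp0F3 hρ, ← integral_const_mul, ← integral_const_mul]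
    refine integral_congr_ae (.of_forall fun s => ?_)
    simp only
    rw [show (1/2 - 1 : ℂ) = -(1/2) by norm_num, show ν + 1/2 - 1 = ν - 1/2 by ring,
      show -(c + ν) - 1 = -c - ν - 1 by ring,
      show w * (u : ℂ) ^ 2 * t * ((s : ℂ) / (1 - s)) ^ 2 =
        -b * (z:ℂ) ^ 2 * (s:ℂ) ^ 2 * (u:ℂ) ^ 2 * (t:ℂ) / (16 * ((1:ℂ) - (s:ℂ)) ^ 2) by
        rw [hw, div_pow, div_mul_eq_div_div]; ring]
    ring
  have middle (u : ℝ) (hu' : u ∈ Ioo (0 : ℝ) 1) : ∫ t in Ioo (0:ℝ) 1,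
      (u:ℂ) ^ (1/2 - 1 : ℂ) * ((1:ℂ) - (u:ℂ)) ^ (ν + 1/2 - 1) *
        ((t:ℂ) ^ (1/2 - 1 : ℂ) * ((1:ℂ) - (t:ℂ)) ^ (ν + 1/2 - 1) *
          ∑' k, A k * (u : ℂ) ^ (2 * k) * (t : ℂ) ^ (1 * k)) =
      (u:ℂ) ^ (1/2 - 1 : ℂ) * ((1:ℂ) - (u:ℂ)) ^ (ν + 1/2 - 1) *
        ∑' k, A k * Complex.betaIntegral (1/2 + (1 * k : ℕ)) (ν + 1/2) * (u : ℂ) ^ (2 * k) := by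
    rw [integral_const_mul, integral_beta_mul_tsum hu hv]
    · simp_rw [mul_right_comm]
    · refine .of_nonneg_of_le (fun k => by positivity) (fun k => ?_) hA
      rw [norm_mul, norm_pow, Complex.norm_of_nonneg hu'.1.le]
      exact mul_le_of_le_one_right (norm_nonneg _) (pow_le_one₀ hu'.1.le hu'.2.le)
  simp_rw [inner]
  rw [setIntegral_congr_fun measurableSet_Ioo middle,
    integral_beta_mul_tsum hu hv (summable_norm_mul_betaIntegral hu hv hA 1), ← tsum_mul_left]
  exact tsum_congr fun k => unifiedG_term_eq hν z (by exact_mod_cast hz.ne') k
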